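/- Let α < 0 and β < 0 be real numbers, and suppose ε₁, ε₃ are real numbers satisfying ε₃ − ε₁ = α + β and h(ε₁) + h(ε₃) = h(α) + h(β). Then ε₁ > 0, ε₃ < 0, and |ε₃| > max(|α|, |β|). -/

import Mathlib

/-- The function `h` from the paper: `h(ε) = ε` if `ε ≥ 0`, `h(ε) = sinh ε` if `ε < 0`. -/
noncomputable def hfun (ε : ℝ) : ℝ := if 0 ≤ ε then ε else Real.sinh ε

/-!
Eliminating `ε₁`, the number `ε₃` solves `h (t - (α + β)) + h t = h α + h β`, whose left side is
strictly increasing in `t`. At `t = α` it equals `h (-β) + h α > h β + h α`, so `ε₃ < α`, and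
likewise `ε₃ < β`. At `t = α + β` it equals `h (α + β) < h α + h β`, because `sinh` is strictly
subadditive on negative numbers; so `ε₃ > α + β`, that is, `ε₁ > 0`.
-/

section OrderedGroup

variable {G H : Type*} [AddCommGroup G] [LinearOrder G] [IsOrderedAddMonoid G]
  [AddCommMonoid H] [PartialOrder H] {h : G → H} {a b x y : G}

theorem lt_of_sub_eq_add_of_map_add_eq [IsOrderedCancelAddMonoid H] (hh : StrictMono h)
    (hb : b < 0) (hxy : y - x = a + b) (hsum : h x + h y = h a + h b) : y < a := by
  by_contra! hay
  have hbx : b < x := calc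
    b < -b := lt_neg_self_iff.2 hb
    _ ≤ x := by grind
  have hlt : h a + h b < h y + h x := add_lt_add_of_le_of_lt (hh.monotone hay) (hh hbx)
  exact hlt.ne' (by rw [add_comm, hsum])

theorem pos_of_sub_eq_add_of_map_add_eq [IsOrderedAddMonoid H] (hh : Monotone h)
    (hab : h 0 + h (a + b) < h a + h b) (hxy : y - x = a + b)
    (hsum : h x + h y = h a + h b) : 0 < x := by
  by_contra! hx
  have hy : y ≤ a + b := by grind
  exact (hsum ▸ hab).not_ge (add_le_add (hh hx) (hh hy))

end OrderedGroup

theorem sinh_add_sinh_lt_sinh_add {x y : ℝ} (hx : 0 < x) (hy : 0 < y) :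
    Real.sinh x + Real.sinh y < Real.sinh (x + y) := by
  have hlt_left : Real.sinh x < Real.sinh x * Real.cosh y :=
    lt_mul_of_one_lt_right (Real.sinh_pos_iff.2 hx) (Real.one_lt_cosh.2 hy.ne')
  have hlt_right : Real.sinh y < Real.cosh x * Real.sinh y :=
    lt_mul_of_one_lt_left (Real.sinh_pos_iff.2 hy) (Real.one_lt_cosh.2 hx.ne')
  rw [Real.sinh_add]
  exact add_lt_add hlt_left hlt_right

theorem hfun_of_nonneg {x : ℝ} (hx : 0 ≤ x) : hfun x = x := if_pos hx

theorem hfun_of_nonpos {x : ℝ} (hx : x ≤ 0) : hfun x = Real.sinh x := by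
  obtain rfl | hx := hx.eq_or_lt
  · rw [hfun_of_nonneg le_rfl, Real.sinh_zero]
  · exact if_neg hx.not_ge

theorem hfun_strictMono : StrictMono hfun := by
  refine StrictMonoOn.Iic_union_Ici (a := 0) ?_ ?_
  · exact (Real.sinh_strictMono.strictMonoOn _).congr fun _ hx => (hfun_of_nonpos hx).symm
  · exact (strictMono_id.strictMonoOn _).congr fun _ hx => (hfun_of_nonneg hx).symm

theorem hfun_add_lt {x y : ℝ} (hx : x < 0) (hy : y < 0) :
    hfun (x + y) < hfun x + hfun y := by
  have hsinh := sinh_add_sinh_lt_sinh_add (neg_pos.2 hx) (neg_pos.2 hy)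
  rw [← neg_add, Real.sinh_neg, Real.sinh_neg, Real.sinh_neg, ← neg_add, neg_lt_neg_iff] at hsinh
  rwa [hfun_of_nonpos (add_neg hx hy).le, hfun_of_nonpos hx.le, hfun_of_nonpos hy.le]

/-- Interaction of two shocks of the same family: the reflected wave is a rarefaction and the
transmitted wave is a shock stronger than each incoming shock. -/
theorem stmt6 (α β ε₁ ε₃ : ℝ) (hα : α < 0) (hβ : β < 0)
    (h1 : ε₃ - ε₁ = α + β)
    (h2 : hfun ε₁ + hfun ε₃ = hfun α + hfun β) :
    0 < ε₁ ∧ ε₃ < 0 ∧ |ε₃| > max |α| |β| := by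
  have hsub : hfun 0 + hfun (α + β) < hfun α + hfun β := by
    rw [hfun_of_nonneg le_rfl, zero_add]
    exact hfun_add_lt hα hβ
  have hltα : ε₃ < α := lt_of_sub_eq_add_of_map_add_eq hfun_strictMono hβ h1 h2
  have hltβ : ε₃ < β := lt_of_sub_eq_add_of_map_add_eq hfun_strictMono hα
    (h1.trans (add_comm α β)) (h2.trans (add_comm _ _))
  have hneg : ε₃ < 0 := hltα.trans hα
  refine ⟨pos_of_sub_eq_add_of_map_add_eq hfun_strictMono.monotone hsub h1 h2, hneg, ?_⟩
  rw [abs_of_neg hneg, abs_of_neg hα, abs_of_neg hβ]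
  exact max_lt (neg_lt_neg hltα) (neg_lt_neg hltβ)
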